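/- Let k be a positive integer and let G be a finite multigraph whose vertex set V is the disjoint union of a four-element set {v₁,v₂,v₃,v₄} and a (possibly empty) set Y, and suppose every vertex of Y has even degree in G. Suppose that after deleting any k−1 or fewer edges from G, the four vertices v₁,v₂,v₃,v₄ can be split into two disjoint pairs {v_a,v_b} and {v_c,v_d} such that there exist a path P₁ between v_a and v_b and a path P₂ between v_c and v_d having no common edges. Then there are k splittings of {v₁,v₂,v₃,v₄} into two disjoint pairs {v_{a(j)},v_{b(j)}} and {v_{c(j)},v_{d(j)}} (for j = 1,…,k), together with 2k paths in G — for each j one path between v_{a(j)} and v_{b(j)} and one path between v_{c(j)} and v_{d(j)} — such that no two of these 2k paths have any common edge. -/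

import Mathlib

/-!
Deleting a cut that separates one of the four vertices from the other three destroys both paths
of the hypothesis, so every such cut has at least `k` edges. Conversely this cut condition is
enough (`exists_pairs_of_cuts`), by an argument in the style of the Lovász–Cherkassky theorem.

Attach to each `v i` a new terminal by `m i` parallel edges, where `m i ∈ {k, k + 1}` has the
parity of the degree of `v i`. All non-terminals then have even degree, and by parity every cut
isolating the terminal `i` has at least `m i` edges. Submodularity of cuts shows that an edge from
a terminal to a non-terminal `y` can always be split off with a second edge at `y` while keeping
these cut bounds (`exists_split`). Each edge of the reduced multigraph stands for a trail of the
original one, and different edges stand for edge-disjoint trails (`Realizes`). In the end only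
edges between terminals matter, and terminal `i` has degree exactly `m i`
(`exists_terminal_edges`). Comparing the four degree equations shows that these edges contain `k`
splittings of the terminals into two pairs (`exists_splitting_counts`).
-/

/-- Degree of a vertex in a multigraph with boundary function `bnd`. -/
def vdeg {V E : Type} [Fintype E] [DecidableEq V] (bnd : E → Finset V) (v : V) : ℕ :=
  (Finset.univ.filter fun e => v ∈ bnd e).card

/-- `IsPath bnd u v ws es` : `ws`, `es` form a path between `u` and `v`. -/
def IsPath {V E : Type} [DecidableEq V] (bnd : E → Finset V) (u v : V)
    (ws : List V) (es : List E) : Prop :=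
  ws.length = es.length + 1 ∧
  ((ws.head? = some u ∧ ws.getLast? = some v) ∨
   (ws.head? = some v ∧ ws.getLast? = some u)) ∧
  (∀ (i : ℕ) (e : E), es[i]? = some e → bnd e = {ws.getD i u, ws.getD (i + 1) u}) ∧
  es.Nodup

/-! ### Cuts of a multigraph -/

section Core

variable {W : Type} [DecidableEq W]

/-- The indicator of the event that an edge joins `X` to its complement. -/
def crosses (X : Finset W) : Sym2 W → ℕ :=
  Sym2.lift ⟨fun u v => if (u ∈ X ↔ v ∈ X) then 0 else 1, fun u v => by simp only [iff_comm]⟩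

theorem crosses_mk (X : Finset W) (u v : W) :
    crosses X s(u, v) = if (u ∈ X ↔ v ∈ X) then 0 else 1 := rfl

/-- The number of edges of `M` joining `X` to its complement. In particular `cutSize M {x}` is the
degree of `x`, loops not counted. -/
def cutSize (M : Multiset (Sym2 W)) (X : Finset W) : ℕ := (M.map (crosses X)).sum

theorem cutSize_cons (e : Sym2 W) (M : Multiset (Sym2 W)) (X : Finset W) :
    cutSize (e ::ₘ M) X = crosses X e + cutSize M X := by simp [cutSize]

theorem cutSize_add (M N : Multiset (Sym2 W)) (X : Finset W) :
    cutSize (M + N) X = cutSize M X + cutSize N X := by simp [cutSize]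

theorem cutSize_submod (M : Multiset (Sym2 W)) (X Y : Finset W) :
    cutSize M (X ∩ Y) + cutSize M (X ∪ Y) ≤ cutSize M X + cutSize M Y := by
  induction M using Multiset.induction_on with
  | empty => simp [cutSize]
  | cons e M ih =>
    have : crosses (X ∩ Y) e + crosses (X ∪ Y) e ≤ crosses X e + crosses Y e := by
      induction e using Sym2.ind with
      | _ u v =>
        simp only [crosses_mk, Finset.mem_inter, Finset.mem_union]
        by_cases h1 : u ∈ X <;> by_cases h2 : u ∈ Y <;> by_cases h3 : v ∈ X <;>
          by_cases h4 : v ∈ Y <;> simp [h1, h2, h3, h4]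
    simp only [cutSize_cons]
    omega

theorem cutSize_posimod (M : Multiset (Sym2 W)) (X Y : Finset W) :
    cutSize M (X \ Y) + cutSize M (Y \ X) ≤ cutSize M X + cutSize M Y := by
  induction M using Multiset.induction_on with
  | empty => simp [cutSize]
  | cons e M ih =>
    have : crosses (X \ Y) e + crosses (Y \ X) e ≤ crosses X e + crosses Y e := by
      induction e using Sym2.ind with
      | _ u v =>
        simp only [crosses_mk, Finset.mem_sdiff]
        by_cases h1 : u ∈ X <;> by_cases h2 : u ∈ Y <;> by_cases h3 : v ∈ X <;>
          by_cases h4 : v ∈ Y <;> simp [h1, h2, h3, h4]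
    simp only [cutSize_cons]
    omega

theorem cutSize_insert_mod (M : Multiset (Sym2 W)) {X : Finset W} {x : W} (hx : x ∉ X) :
    cutSize M (insert x X) % 2 = (cutSize M {x} + cutSize M X) % 2 := by
  induction M using Multiset.induction_on with
  | empty => simp [cutSize]
  | cons e M ih =>
    have : crosses (insert x X) e % 2 = (crosses {x} e + crosses X e) % 2 := by
      induction e using Sym2.ind with
      | _ u v =>
        simp only [crosses_mk, Finset.mem_insert, Finset.mem_singleton]
        by_cases h1 : u ∈ X <;> by_cases h2 : u = x <;> by_cases h3 : v ∈ X <;>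
          by_cases h4 : v = x <;> simp_all
    simp only [cutSize_cons]
    omega

theorem cutSize_even (M : Multiset (Sym2 W)) (X : Finset W)
    (h : ∀ x ∈ X, cutSize M {x} % 2 = 0) : cutSize M X % 2 = 0 := by
  induction X using Finset.induction_on with
  | empty =>
    have : cutSize M ∅ = 0 := by
      apply Multiset.sum_eq_zero
      intro n hn
      obtain ⟨e, -, rfl⟩ := Multiset.mem_map.1 hn
      induction e using Sym2.ind with
      | _ u v => simp [crosses_mk]
    simp [this]
  | insert x X hx ih =>
    have h1 := h x (by simp)
    have h2 := ih fun z hz => h z (by simp [hz])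
    have := cutSize_insert_mod M hx
    omega

/-- With all degrees outside `T` even, the parity of a cut separating a single terminal `t` from
the others is that of the degree of `t`. -/
theorem cutSize_mod (M : Multiset (Sym2 W)) (T : Finset W)
    (hev : ∀ y, y ∉ T → cutSize M {y} % 2 = 0) {X : Finset W} {t : W} (hX : X ∩ T = {t}) :
    cutSize M X % 2 = cutSize M {t} % 2 := by
  have ht : t ∈ X ∩ T := by simp [hX]
  have hX' : insert t (X.erase t) = X := Finset.insert_erase (Finset.mem_inter.1 ht).1
  have h1 := cutSize_insert_mod M (Finset.notMem_erase t X)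
  have h2 : cutSize M (X.erase t) % 2 = 0 := by
    apply cutSize_even
    intro x hx
    apply hev
    intro hxT
    have : x ∈ X ∩ T := Finset.mem_inter.2 ⟨(Finset.mem_erase.1 hx).2, hxT⟩
    rw [hX, Finset.mem_singleton] at this
    exact (Finset.mem_erase.1 hx).1 this
  rw [hX'] at h1
  omega

theorem cutSize_lt (M : Multiset (Sym2 W)) {X Y : Finset W} {e : Sym2 W} (he : e ∈ M)
    (hlt : crosses X e < crosses Y e) (hle : ∀ f ∈ M, crosses X f ≤ crosses Y f) :
    cutSize M X < cutSize M Y := by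
  obtain ⟨M, rfl⟩ := Multiset.exists_cons_of_mem he
  simp only [cutSize_cons]
  have : cutSize M X ≤ cutSize M Y :=
    Multiset.sum_map_le_sum_map _ _ fun f hf => hle f (Multiset.mem_cons_of_mem hf)
  omega

/-- `X` separates the terminal `t` from all other terminals of `T` by as few edges as `{t}` does. -/
def Tight (M : Multiset (Sym2 W)) (T : Finset W) (t : W) (X : Finset W) : Prop :=
  X ∩ T = {t} ∧ cutSize M X = cutSize M {t}

/-! ### Splitting off -/

theorem Tight.union_inter {M : Multiset (Sym2 W)} {T : Finset W} {t : W} {X Y : Finset W}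
    (hcut : ∀ s ∈ T, ∀ X : Finset W, X ∩ T = {s} → cutSize M {s} ≤ cutSize M X)
    (hX : Tight M T t X) (hY : Tight M T t Y) :
    Tight M T t (X ∪ Y) ∧ Tight M T t (X ∩ Y) := by
  have ht : t ∈ T := by
    have : t ∈ X ∩ T := by simp [hX.1]
    exact (Finset.mem_inter.1 this).2
  have hu : (X ∪ Y) ∩ T = {t} := by rw [Finset.union_inter_distrib_right, hX.1, hY.1]; simp
  have hi : (X ∩ Y) ∩ T = {t} := by
    rw [Finset.inter_assoc, hY.1, ← hX.1, ← Finset.inter_assoc, Finset.inter_self]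
  have h := cutSize_submod M X Y
  have h1 := hcut t ht _ hu
  have h2 := hcut t ht _ hi
  have h3 := hX.2
  have h4 := hY.2
  exact ⟨⟨hu, by omega⟩, ⟨hi, by omega⟩⟩

/-- Uncrossing of tight sets for different terminals. Equality in the posimodular inequality also
forbids edges from the intersection to the complement of the union. -/
theorem Tight.sdiff {M : Multiset (Sym2 W)} {T : Finset W} {s t : W} {X Y : Finset W}
    (hcut : ∀ s ∈ T, ∀ X : Finset W, X ∩ T = {s} → cutSize M {s} ≤ cutSize M X)
    (hst : s ≠ t) (hX : Tight M T s X) (hY : Tight M T t Y) :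
    Tight M T t (Y \ X) ∧
      ∀ a b, s(a, b) ∈ M → a ∈ X → a ∈ Y → b ∉ X → b ∉ Y → False := by
  have hs : s ∈ X ∩ T := by simp [hX.1]
  have ht : t ∈ Y ∩ T := by simp [hY.1]
  rw [Finset.mem_inter] at hs ht
  have key : ∀ x, x ∈ T → ((x ∈ X ↔ x = s) ∧ (x ∈ Y ↔ x = t)) := by
    intro x hx
    have h1 := congrArg (x ∈ ·) hX.1
    have h2 := congrArg (x ∈ ·) hY.1
    simpa [hx] using And.intro h1 h2
  have hxy : (X \ Y) ∩ T = {s} := by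
    ext x
    by_cases hx : x ∈ T
    · have := key x hx
      simp [hx, this]
      rintro rfl; exact hst
    · simp [hx]; rintro rfl; exact hx hs.2
  have hyx : (Y \ X) ∩ T = {t} := by
    ext x
    by_cases hx : x ∈ T
    · have := key x hx
      simp [hx, this]
      rintro rfl; exact hst.symm
    · simp [hx]; rintro rfl; exact hx ht.2
  have h1 := hcut s hs.2 _ hxy
  have h2 := hcut t ht.2 _ hyx
  have h3 := hX.2
  have h4 := hY.2
  have h := cutSize_posimod M X Y
  refine ⟨⟨hyx, by omega⟩, ?_⟩
  intro a b hab aX aY bX bY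
  obtain ⟨M', rfl⟩ := Multiset.exists_cons_of_mem hab
  have h' := cutSize_posimod M' X Y
  rw [cutSize_cons _ _ (X \ Y)] at h1
  rw [cutSize_cons _ _ (Y \ X)] at h2
  rw [cutSize_cons _ _ X] at h3
  rw [cutSize_cons _ _ Y] at h4
  simp [crosses_mk, aX, aY, bX, bY] at h1 h2 h3 h4
  omega

/-- An edge `t — y` from a terminal to a non-terminal can be split off with another edge `y — w`
at `y` so that no cut isolating a single terminal drops below the degree of that terminal.

Otherwise each edge `y — w` is blocked by a tight set separating `y` from both `t` and `w`. With
`A` the largest tight set for `t` avoiding `y` and `B` the smallest tight set containing `y` but not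
`t`, uncrossing shows that all neighbours of `y` lie in `A` (if there is no `B`) or outside `B`,
so adding `y` to `A` or removing it from `B` gives too small a cut. -/
theorem exists_split [Fintype W] {M0 : Multiset (Sym2 W)} {T : Finset W} {t y : W} (ht : t ∈ T) (hy : y ∉ T)
    (hev : ∀ z, z ∉ T → cutSize (s(t, y) ::ₘ M0) {z} % 2 = 0)
    (hcut : ∀ s ∈ T, ∀ X : Finset W, X ∩ T = {s} →
      cutSize (s(t, y) ::ₘ M0) {s} ≤ cutSize (s(t, y) ::ₘ M0) X) :
    ∃ w M1, M0 = s(y, w) ::ₘ M1 ∧ ∀ s ∈ T, ∀ X : Finset W, X ∩ T = {s} →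
      cutSize (s(t, y) ::ₘ M0) {s} ≤ cutSize (s(t, w) ::ₘ M1) X := by
  classical
  by_contra hno
  push Not at hno
  set M := s(t, y) ::ₘ M0 with hM
  have hyt : y ≠ t := fun h => hy (h ▸ ht)
  have heM : s(t, y) ∈ M := by simp [hM]
  have heM' : s(y, t) ∈ M := by rw [Sym2.eq_swap]; exact heM
  -- every other edge at `y` is blocked by a tight set
  have hblock : ∀ w, s(y, w) ∈ M0 →
      (∃ X, Tight M T t X ∧ w ∈ X ∧ y ∉ X) ∨
      (∃ s X, Tight M T s X ∧ y ∈ X ∧ t ∉ X ∧ w ∉ X) := by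
    intro w hw
    obtain ⟨M1, hM1⟩ := Multiset.exists_cons_of_mem hw
    obtain ⟨s, hs, X, hX, hlt⟩ := hno w M1 hM1
    have hge := hcut s hs X hX
    have hpar := cutSize_mod M T hev hX
    have hsX : s ∈ X ∩ T := by simp [hX]
    rw [hM, hM1] at hge hpar hlt
    rw [cutSize_cons _ _ X, cutSize_cons _ _ X] at hge hpar
    rw [cutSize_cons _ _ X] at hlt
    have htight : t ∈ X → s = t := by
      intro h
      have : t ∈ X ∩ T := Finset.mem_inter.2 ⟨h, ht⟩
      rw [hX, Finset.mem_singleton] at this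
      exact this.symm
    have hT : crosses X s(t, y) = 1 → crosses X s(y, w) = 1 → crosses X s(t, w) = 0 →
        Tight M T s X := by
      intro h1 h2 h3
      refine ⟨hX, ?_⟩
      rw [hM, hM1, cutSize_cons _ _ X, cutSize_cons _ _ X]
      omega
    simp only [crosses_mk] at hge hpar hlt hT
    by_cases h1 : t ∈ X <;> by_cases h2 : y ∈ X <;> by_cases h3 : w ∈ X <;>
      simp only [h1, h2, h3, iff_true, iff_false, iff_self, if_true, if_false, not_true_eq_false,
        forall_const] at hge hpar hlt hT <;>
      first
      | omega
      | skip
    · left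
      obtain rfl := htight h1
      exact ⟨X, hT, h3, h2⟩
    · right
      exact ⟨s, X, hT, h2, h1, h3⟩
  -- the largest tight set for `t` avoiding `y`
  obtain ⟨A, hA, hAmax⟩ := Finset.exists_max_image
    (Finset.univ.filter fun X => Tight M T t X ∧ y ∉ X) Finset.card
    ⟨{t}, by
      simp only [Finset.mem_filter, Finset.mem_univ, true_and, Finset.mem_singleton, hyt,
        not_false_eq_true, and_true]
      exact ⟨by simp [ht], rfl⟩⟩
  simp only [Finset.mem_filter, Finset.mem_univ, true_and] at hA hAmax
  have hAX : ∀ X, Tight M T t X → y ∉ X → X ⊆ A := by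
    intro X hX hyX
    have h := hAmax (A ∪ X) ⟨(hA.1.union_inter hcut hX).1, by simp [hA.2, hyX]⟩
    rw [Finset.eq_of_subset_of_card_le Finset.subset_union_left h]
    exact Finset.subset_union_right
  have htA : t ∈ A := by
    have : t ∈ A ∩ T := by simp [hA.1.1]
    exact (Finset.mem_inter.1 this).1
  by_cases hB : ∃ s X, Tight M T s X ∧ y ∈ X ∧ t ∉ X
  · -- the smallest tight set containing `y` and avoiding `t`
    obtain ⟨s0, X0, hX0⟩ := hB
    obtain ⟨B, hB, hBmin⟩ := Finset.exists_min_image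
      (Finset.univ.filter fun X => (∃ s, Tight M T s X) ∧ y ∈ X ∧ t ∉ X) Finset.card
      ⟨X0, by simp only [Finset.mem_filter, Finset.mem_univ, true_and]; exact ⟨⟨s0, hX0.1⟩, hX0.2⟩⟩
    simp only [Finset.mem_filter, Finset.mem_univ, true_and] at hB hBmin
    obtain ⟨⟨r, hBr⟩, hyB, htB⟩ := hB
    have hrB : r ∈ B ∩ T := by simp [hBr.1]
    rw [Finset.mem_inter] at hrB
    have hrt : t ≠ r := fun h => htB (h ▸ hrB.1)
    have hBsub : ∀ X, (∃ s, Tight M T s (B ∩ X)) → y ∈ X → B ⊆ X := by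
      intro X hX hyX
      have h := hBmin (B ∩ X) ⟨hX, by simp [hyB, hyX], by simp [htB]⟩
      rw [← Finset.eq_of_subset_of_card_le Finset.inter_subset_left h]
      exact Finset.inter_subset_right
    have hBX : ∀ s X, Tight M T s X → y ∈ X → t ∉ X → B ⊆ X := by
      intro s X hX hyX htX
      by_cases hsr : s = r
      · subst hsr
        exact hBsub X ⟨s, (hBr.union_inter hcut hX).2⟩ hyX
      · exact ((hX.sdiff hcut hsr hBr).2 y t heM' hyX hyB htX htB).elim
    have hBA : Disjoint B A := by
      have h := (hA.1.sdiff hcut hrt hBr).1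
      have h2 : B ⊆ B \ A := hBsub (B \ A)
        ⟨r, by rwa [Finset.inter_eq_right.2 Finset.sdiff_subset]⟩ (by simp [hyB, hA.2])
      exact Finset.disjoint_left.2 fun x hx => (Finset.mem_sdiff.1 (h2 hx)).2
    have hnb : ∀ w, s(y, w) ∈ M → w ∉ B := by
      intro w hw
      rw [hM, Multiset.mem_cons] at hw
      rcases hw with hw | hw
      · have : w = t := by
          rcases Sym2.eq_iff.1 hw with h | h
          · exact (hyt h.1).elim
          · exact h.2
        exact this ▸ htB
      · rcases hblock w hw with ⟨X, hX, hwX, hyX⟩ | ⟨s, X, hX, hyX, htX, hwX⟩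
        · exact fun h => Finset.disjoint_left.1 hBA h (hAX X hX hyX hwX)
        · exact fun h => hwX (hBX s X hX hyX htX h)
    have hlt : cutSize M (B.erase y) < cutSize M B := by
      apply cutSize_lt M heM
      · simp [crosses_mk, htB, hyB]
      · intro f hf
        induction f using Sym2.ind with
        | _ u v =>
          have h1 : u = y → v ∉ B := fun h => hnb v (h ▸ hf)
          have h2 : v = y → u ∉ B := fun h => hnb u (by rw [Sym2.eq_swap]; exact h ▸ hf)
          simp only [crosses_mk, Finset.mem_erase]
          by_cases h3 : u = y <;> by_cases h4 : v = y <;> simp_all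
    have hge := hcut r hrB.2 (B.erase y) (by
      rw [← hBr.1]
      ext x
      simp only [Finset.mem_inter, Finset.mem_erase]
      constructor
      · tauto
      · rintro ⟨h1, h2⟩
        exact ⟨⟨fun h => hy (h ▸ h2), h1⟩, h2⟩)
    have := hBr.2
    omega
  · have hnb : ∀ w, s(y, w) ∈ M → w ∈ A := by
      intro w hw
      rw [hM, Multiset.mem_cons] at hw
      rcases hw with hw | hw
      · have : w = t := by
          rcases Sym2.eq_iff.1 hw with h | h
          · exact (hyt h.1).elim
          · exact h.2
        exact this ▸ htA
      · rcases hblock w hw with ⟨X, hX, hwX, hyX⟩ | ⟨s, X, hX, hyX, htX, hwX⟩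
        · exact hAX X hX hyX hwX
        · exact (hB ⟨s, X, hX, hyX, htX⟩).elim
    have hyA := hA.2
    have hlt : cutSize M (insert y A) < cutSize M A := by
      apply cutSize_lt M heM
      · simp [crosses_mk, htA, hA.2]
      · intro f hf
        induction f using Sym2.ind with
        | _ u v =>
          have h1 : u = y → v ∈ A := fun h => hnb v (h ▸ hf)
          have h2 : v = y → u ∈ A := fun h => hnb u (by rw [Sym2.eq_swap]; exact h ▸ hf)
          simp only [crosses_mk, Finset.mem_insert]
          by_cases h3 : u = y <;> by_cases h4 : v = y <;> simp_all
    have hge := hcut t ht (insert y A) (by rw [Finset.insert_inter_of_notMem hy, hA.1.1])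
    have := hA.1.2
    omega

/-- Repeated splitting off reduces the multigraph to edges between distinct terminals without
changing the degrees of the terminals. `Real` is any property that survives splitting off and the
deletion of edges. -/
theorem exists_terminal_edges [Fintype W] (Real : Multiset (Sym2 W) → Prop)
    (hjoin : ∀ a b c M, Real (s(a, b) ::ₘ s(b, c) ::ₘ M) → Real (s(a, c) ::ₘ M))
    (hdrop : ∀ M N, M ≤ N → Real N → Real M) (T : Finset W) :
    ∀ (n : ℕ) (M : Multiset (Sym2 W)), M.card = n → Real M →
      (∀ y, y ∉ T → cutSize M {y} % 2 = 0) →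
      (∀ s ∈ T, ∀ X : Finset W, X ∩ T = {s} → cutSize M {s} ≤ cutSize M X) →
      ∃ M', Real M' ∧ (∀ s ∈ T, cutSize M' {s} = cutSize M {s}) ∧
        ∀ e ∈ M', ∃ a ∈ T, ∃ b ∈ T, a ≠ b ∧ e = s(a, b) := by
  intro n
  induction n with
  | zero =>
    intro M hM hR _ _
    rw [Multiset.card_eq_zero] at hM
    subst hM
    exact ⟨0, hR, fun _ _ => rfl, by simp⟩
  | succ n ih =>
    intro M hM hR hev hcut
    by_cases hmix : ∃ t ∈ T, ∃ y, y ∉ T ∧ s(t, y) ∈ M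
    · obtain ⟨t, ht, y, hy, hty⟩ := hmix
      obtain ⟨M0, rfl⟩ := Multiset.exists_cons_of_mem hty
      obtain ⟨w, M1, rfl, hsplit⟩ := exists_split ht hy hev hcut
      have hcmp : ∀ X : Finset W, crosses X s(t, w) ≤ crosses X s(t, y) + crosses X s(y, w) ∧
          crosses X s(t, w) % 2 = (crosses X s(t, y) + crosses X s(y, w)) % 2 := by
        intro X
        simp only [crosses_mk]
        by_cases h1 : t ∈ X <;> by_cases h2 : y ∈ X <;> by_cases h3 : w ∈ X <;> simp [h1, h2, h3]
      have hle : ∀ X, cutSize (s(t, w) ::ₘ M1) X ≤ cutSize (s(t, y) ::ₘ s(y, w) ::ₘ M1) X := by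
        intro X
        have := (hcmp X).1
        simp only [cutSize_cons]
        omega
      have heq : ∀ s ∈ T, cutSize (s(t, w) ::ₘ M1) {s} =
          cutSize (s(t, y) ::ₘ s(y, w) ::ₘ M1) {s} := fun s hs =>
        le_antisymm (hle _) (hsplit s hs {s} (by simp [hs]))
      obtain ⟨M', h1, h2, h3⟩ := ih (s(t, w) ::ₘ M1) (by simpa using hM) (hjoin _ _ _ _ hR)
        (by
          intro z hz
          have h1 := hev z hz
          have h2 := (hcmp {z}).2
          simp only [cutSize_cons] at h1 ⊢
          omega)
        (fun s hs X hX => heq s hs ▸ hsplit s hs X hX)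
      exact ⟨M', h1, fun s hs => (h2 s hs).trans (heq s hs), h3⟩
    · push Not at hmix
      classical
      refine ⟨M.filter fun e => ∃ a ∈ T, ∃ b ∈ T, a ≠ b ∧ e = s(a, b),
        hdrop _ _ (Multiset.filter_le _ _) hR, ?_, fun e he => (Multiset.mem_filter.1 he).2⟩
      intro s hs
      -- the discarded edges do not meet `s` or are loops
      conv_rhs => rw [← Multiset.filter_add_not (fun e => ∃ a ∈ T, ∃ b ∈ T, a ≠ b ∧ e = s(a, b)) M]
      rw [cutSize_add]
      symm
      apply Nat.add_eq_left.2
      apply Multiset.sum_eq_zero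
      intro n hn
      obtain ⟨e, he, rfl⟩ := Multiset.mem_map.1 hn
      rw [Multiset.mem_filter] at he
      obtain ⟨he, hne⟩ := he
      induction e using Sym2.ind with
      | _ u v =>
        have h1 : u ∈ T → v ∈ T := fun hu => by
          by_contra hv; exact hmix u hu v hv he
        have h2 : v ∈ T → u ∈ T := fun hv => by
          by_contra hu; exact hmix v hv u hu (by rw [Sym2.eq_swap]; exact he)
        have h3 : u ∈ T → u = v := fun hu => by
          by_contra h; exact hne ⟨u, hu, v, h1 hu, h, rfl⟩
        simp only [crosses_mk, Finset.mem_singleton]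
        rw [if_pos]
        constructor
        · rintro rfl; exact (h3 hs).symm
        · rintro rfl; exact h3 (h2 hs)

end Core

/-! ### Trails and realizations of abstract edges -/

section Trails

variable {V E : Type} [DecidableEq V]

/-- `Trail bnd u v es`: the edges `es` are traversed in order by a walk from `u` to `v`. Edges may
repeat; distinctness is imposed separately. -/
inductive Trail (bnd : E → Finset V) : V → V → List E → Prop
  | nil (u : V) : Trail bnd u u []
  | cons {u w v : V} {e : E} {es : List E} (he : bnd e = {u, w}) (h : Trail bnd w v es) :
      Trail bnd u v (e :: es)

theorem Trail.append {bnd : E → Finset V} {u v w : V} {p q : List E}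
    (hp : Trail bnd u v p) (hq : Trail bnd v w q) : Trail bnd u w (p ++ q) := by
  induction hp with
  | nil => simpa using hq
  | cons he _ ih => exact .cons he (ih hq)

theorem Trail.reverse {bnd : E → Finset V} {u v : V} {p : List E}
    (hp : Trail bnd u v p) : Trail bnd v u p.reverse := by
  induction hp with
  | nil => exact .nil _
  | cons he _ ih =>
    rw [List.reverse_cons]
    exact ih.append (.cons (by rw [he, Finset.pair_comm]) (.nil _))

theorem Trail.exists_isPath {bnd : E → Finset V} {u v : V} {p : List E}
    (hp : Trail bnd u v p) (hnd : p.Nodup) : ∃ ws, IsPath bnd u v ws p := by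
  suffices h : ∃ ws : List V, ws.length = p.length + 1 ∧ ws.head? = some u ∧
      ws.getLast? = some v ∧
      ∀ (i : ℕ) (e : E) (z : V), p[i]? = some e → bnd e = {ws.getD i z, ws.getD (i + 1) z} by
    obtain ⟨ws, h1, h2, h3, h4⟩ := h
    exact ⟨ws, h1, .inl ⟨h2, h3⟩, fun i e => h4 i e u, hnd⟩
  clear hnd
  induction hp with
  | nil u => exact ⟨[u], by simp⟩
  | @cons u w v e es he _ ih =>
    obtain ⟨ws, h1, h2, h3, h4⟩ := ih
    obtain ⟨x, ws, rfl⟩ : ∃ x l, ws = x :: l := by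
      cases ws with
      | nil => simp at h1
      | cons x l => exact ⟨x, l, rfl⟩
    obtain rfl : x = w := by simpa using h2
    refine ⟨u :: x :: ws, by simpa using h1, by simp, by simpa using h3, ?_⟩
    intro i f z hf
    cases i with
    | zero =>
      obtain rfl : e = f := by simpa using hf
      simpa using he
    | succ i =>
      have := h4 i f z (by simpa using hf)
      simpa using this

theorem IsPath.exists_crossing {bnd : E → Finset V} {u v : V} {ws : List V} {es : List E}
    (h : IsPath bnd u v ws es) (X : Finset V) (huv : ¬ (u ∈ X ↔ v ∈ X)) :
    ∃ e ∈ es, ∃ a b, bnd e = {a, b} ∧ a ∈ X ∧ b ∉ X := by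
  by_contra hno
  push Not at hno
  obtain ⟨hlen, hends, hedge, -⟩ := h
  have key : ∀ i, i ≤ es.length → (ws.getD i u ∈ X ↔ ws.getD 0 u ∈ X) := by
    intro i
    induction i with
    | zero => simp
    | succ i ih =>
      intro hi
      rw [← ih (by omega)]
      have he := hedge i es[i] (by simp)
      have hm : es[i] ∈ es := by simp
      constructor
      · intro h1
        exact hno _ hm _ _ (by rw [he, Finset.pair_comm]) h1
      · intro h1
        exact hno _ hm _ _ he h1
  have h0 := key es.length le_rfl
  have hl : ws.getLast? = some (ws.getD es.length u) := by
    rw [List.getLast?_eq_getElem?, List.getD_eq_getElem?_getD, hlen, Nat.add_sub_cancel,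
      List.getElem?_eq_getElem (by omega)]
    rfl
  have hh : ws.head? = some (ws.getD 0 u) := by
    rw [List.head?_eq_getElem?, List.getD_eq_getElem?_getD, List.getElem?_eq_getElem (by omega)]
    rfl
  rw [hl, hh, Option.some_inj, Option.some_inj, Option.some_inj, Option.some_inj] at hends
  rcases hends with ⟨h1, h2⟩ | ⟨h1, h2⟩ <;> rw [h1, h2] at h0 <;> tauto

variable {W : Type}

/-- The abstract edges of `M`, whose ends are projected to `V` by `π`, can be replaced
simultaneously by trails using each edge no more often than it occurs in `U`. For `U` without
repetitions, the trails are edge-disjoint paths. -/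
def Realizes (bnd : E → Finset V) (π : W → V) (M : Multiset (Sym2 W)) (U : Multiset E) : Prop :=
  ∃ N : Multiset (W × W × List E), (∀ p ∈ N, Trail bnd (π p.1) (π p.2.1) p.2.2) ∧
    N.map (fun p => s(p.1, p.2.1)) = M ∧ (N.map fun p => (p.2.2 : Multiset E)).sum ≤ U

theorem realizes_cons {bnd : E → Finset V} {π : W → V} {a b : W} {M : Multiset (Sym2 W)}
    {U : Multiset E} : Realizes bnd π (s(a, b) ::ₘ M) U ↔
      ∃ p U', Trail bnd (π a) (π b) p ∧ (p : Multiset E) + U' ≤ U ∧ Realizes bnd π M U' := by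
  classical
  constructor
  · rintro ⟨N, hN, hM, hU⟩
    obtain ⟨q, hq, hqab, hM'⟩ := (Multiset.map_eq_cons _ _ _ _).2 hM
    obtain ⟨N', rfl⟩ := Multiset.exists_cons_of_mem hq
    rw [Multiset.erase_cons_head] at hM'
    rw [Multiset.map_cons, Multiset.sum_cons] at hU
    have hN' : Realizes bnd π M (N'.map fun p => (p.2.2 : Multiset E)).sum :=
      ⟨N', fun p hp => hN p (Multiset.mem_cons_of_mem hp), hM', le_rfl⟩
    have ht := hN q hq
    rcases Sym2.eq_iff.1 hqab with ⟨h1, h2⟩ | ⟨h1, h2⟩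
    · rw [h1, h2] at ht
      exact ⟨_, _, ht, hU, hN'⟩
    · rw [h1, h2] at ht
      exact ⟨_, _, ht.reverse, by simpa using hU, hN'⟩
  · rintro ⟨p, U', hp, hU, N, hN, hM, hU'⟩
    refine ⟨(a, b, p) ::ₘ N, ?_, by simp [hM], ?_⟩
    · intro q hq
      rcases Multiset.mem_cons.1 hq with rfl | hq
      · exact hp
      · exact hN q hq
    · rw [Multiset.map_cons, Multiset.sum_cons]
      exact (add_le_add le_rfl hU').trans hU

theorem Realizes.mono {bnd : E → Finset V} {π : W → V} {M : Multiset (Sym2 W)}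
    {U U' : Multiset E} (h : Realizes bnd π M U) (hU : U ≤ U') : Realizes bnd π M U' := by
  obtain ⟨N, h1, h2, h3⟩ := h
  exact ⟨N, h1, h2, h3.trans hU⟩

theorem Realizes.drop {bnd : E → Finset V} {π : W → V} {M M' : Multiset (Sym2 W)}
    {U : Multiset E} (h : Realizes bnd π M U) (hM : M' ≤ M) : Realizes bnd π M' U := by
  obtain ⟨D, rfl⟩ := Multiset.le_iff_exists_add.1 hM
  clear hM
  induction D using Multiset.induction_on with
  | empty => simpa using h
  | cons e D ih =>
    apply ih
    induction e using Sym2.ind with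
    | _ a b =>
      rw [Multiset.add_cons, realizes_cons] at h
      obtain ⟨p, U', -, hU, h⟩ := h
      exact h.mono ((Multiset.le_add_left _ _).trans hU)

theorem Realizes.join {bnd : E → Finset V} {π : W → V} {M : Multiset (Sym2 W)}
    {U : Multiset E} {a b c : W} (h : Realizes bnd π (s(a, b) ::ₘ s(b, c) ::ₘ M) U) :
    Realizes bnd π (s(a, c) ::ₘ M) U := by
  obtain ⟨p, U₁, hp, hU₁, h⟩ := realizes_cons.1 h
  obtain ⟨q, U₂, hq, hU₂, h⟩ := realizes_cons.1 h
  refine realizes_cons.2 ⟨p ++ q, U₂, hp.append hq, ?_, h⟩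
  rw [← Multiset.coe_add, add_assoc]
  exact (add_le_add le_rfl hU₂).trans hU₁

theorem Realizes.add {bnd : E → Finset V} {π : W → V} {M M' : Multiset (Sym2 W)}
    {U U' : Multiset E} (h : Realizes bnd π M U) (h' : Realizes bnd π M' U') :
    Realizes bnd π (M + M') (U + U') := by
  obtain ⟨N, h1, h2, h3⟩ := h
  obtain ⟨N', h1', h2', h3'⟩ := h'
  refine ⟨N + N', ?_, by simp [h2, h2'], by simpa using add_le_add h3 h3'⟩
  intro p hp
  rcases Multiset.mem_add.1 hp with hp | hp
  exacts [h1 p hp, h1' p hp]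

/-- Reads off a list of `k` splittings with their trails from a realization of terminal edges that
come grouped into `x`, `y` and `z` copies of the three splittings. -/
theorem Realizes.exists_pairs {bnd : E → Finset V} (v : Fin 4 → V) {π : W → V} (τ : Fin 4 → W)
    (hπ : ∀ i, π (τ i) = v i) (k : ℕ) :
    ∀ (x y z : ℕ) (U : Multiset E), x + y + z = k →
      Realizes bnd π (x • ({s(τ 0, τ 1), s(τ 2, τ 3)} : Multiset (Sym2 W)) +
        y • ({s(τ 0, τ 2), s(τ 1, τ 3)} : Multiset (Sym2 W)) +
        z • ({s(τ 0, τ 3), s(τ 1, τ 2)} : Multiset (Sym2 W))) U →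
      ∃ l : List ((V × V × List E) × (V × V × List E)), l.length = k ∧
        (∀ q ∈ l, Trail bnd q.1.1 q.1.2.1 q.1.2.2 ∧ Trail bnd q.2.1 q.2.2.1 q.2.2.2 ∧
          ({q.1.1, q.1.2.1, q.2.1, q.2.2.1} : Finset V) = {v 0, v 1, v 2, v 3}) ∧
        ((l.flatMap fun q => q.1.2.2 ++ q.2.2.2 : List E) : Multiset E) ≤ U := by
  induction k with
  | zero =>
    intro x y z U _ _
    exact ⟨[], by simp⟩
  | succ k ih =>
    -- one step: two edges forming a splitting are peeled off
    have step : ∀ (i j r s : Fin 4) (x y z : ℕ) (U : Multiset E), x + y + z = k →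
        ({v i, v j, v r, v s} : Finset V) = {v 0, v 1, v 2, v 3} →
        Realizes bnd π (s(τ i, τ j) ::ₘ s(τ r, τ s) ::ₘ
          (x • ({s(τ 0, τ 1), s(τ 2, τ 3)} : Multiset (Sym2 W)) +
          y • ({s(τ 0, τ 2), s(τ 1, τ 3)} : Multiset (Sym2 W)) +
          z • ({s(τ 0, τ 3), s(τ 1, τ 2)} : Multiset (Sym2 W)))) U →
        ∃ l : List ((V × V × List E) × (V × V × List E)), l.length = k + 1 ∧
        (∀ q ∈ l, Trail bnd q.1.1 q.1.2.1 q.1.2.2 ∧ Trail bnd q.2.1 q.2.2.1 q.2.2.2 ∧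
          ({q.1.1, q.1.2.1, q.2.1, q.2.2.1} : Finset V) = {v 0, v 1, v 2, v 3}) ∧
        ((l.flatMap fun q => q.1.2.2 ++ q.2.2.2 : List E) : Multiset E) ≤ U := by
      intro i j r s x y z U hk hset h
      obtain ⟨p, U₁, hp, hU₁, h⟩ := realizes_cons.1 h
      obtain ⟨p', U₂, hp', hU₂, h⟩ := realizes_cons.1 h
      obtain ⟨l, hl, hl', hlU⟩ := ih x y z U₂ hk h
      rw [hπ, hπ] at hp hp'
      refine ⟨((v i, v j, p), (v r, v s, p')) :: l, by simp [hl], ?_, ?_⟩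
      · intro q hq
        rcases List.mem_cons.1 hq with rfl | hq
        · exact ⟨hp, hp', hset⟩
        · exact hl' q hq
      · rw [List.flatMap_cons, ← Multiset.coe_add, ← Multiset.coe_add, add_assoc]
        exact (add_le_add le_rfl ((add_le_add le_rfl hlU).trans hU₂)).trans hU₁
    intro x y z U hk h
    rcases x with _ | x
    · rcases y with _ | y
      · rcases z with _ | z
        · omega
        · refine step 0 3 1 2 0 0 z U (by omega) (by ext; simp; tauto) ?_
          convert h using 1
          simp only [← Multiset.singleton_add, Multiset.insert_eq_cons, succ_nsmul]
          abel
      · refine step 0 2 1 3 0 y z U (by omega) (by ext; simp; tauto) ?_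
        convert h using 1
        simp only [← Multiset.singleton_add, Multiset.insert_eq_cons, succ_nsmul]
        abel
    · refine step 0 1 2 3 x y z U (by omega) rfl ?_
      convert h using 1
      simp only [← Multiset.singleton_add, Multiset.insert_eq_cons, succ_nsmul]
      abel

end Trails

/-! ### Edges among four terminals -/

section Terminals

variable {W : Type} [DecidableEq W]

theorem exists_multiplicities (τ : Fin 4 → W) (M : Multiset (Sym2 W))
    (hM : ∀ e ∈ M, ∃ a ∈ Finset.univ.image τ, ∃ b ∈ Finset.univ.image τ, a ≠ b ∧ e = s(a, b)) :
    ∃ n01 n23 n02 n13 n03 n12 : ℕ,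
      M = n01 • {s(τ 0, τ 1)} + n23 • {s(τ 2, τ 3)} + n02 • {s(τ 0, τ 2)} +
        n13 • {s(τ 1, τ 3)} + n03 • {s(τ 0, τ 3)} + n12 • {s(τ 1, τ 2)} := by
  induction M using Multiset.induction_on with
  | empty => exact ⟨0, 0, 0, 0, 0, 0, by simp⟩
  | cons e M ih =>
    obtain ⟨n01, n23, n02, n13, n03, n12, rfl⟩ :=
      ih fun f hf => hM f (Multiset.mem_cons_of_mem hf)
    obtain ⟨a, ha, b, hb, hab, rfl⟩ := hM e (Multiset.mem_cons_self _ _)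
    obtain ⟨i, -, rfl⟩ := Finset.mem_image.1 ha
    obtain ⟨j, -, rfl⟩ := Finset.mem_image.1 hb
    have hij : i ≠ j := fun h => hab (h ▸ rfl)
    clear hM ha hb hab ih
    wlog hlt : i < j generalizing i j
    · rw [Sym2.eq_swap]
      exact this j i hij.symm (lt_of_le_of_ne (not_lt.1 hlt) hij.symm)
    have hcases : (i = 0 ∧ j = 1) ∨ (i = 2 ∧ j = 3) ∨ (i = 0 ∧ j = 2) ∨ (i = 1 ∧ j = 3) ∨
        (i = 0 ∧ j = 3) ∨ (i = 1 ∧ j = 2) := by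
      revert i j; decide
    rw [← Multiset.singleton_add]
    rcases hcases with ⟨rfl, rfl⟩ | ⟨rfl, rfl⟩ | ⟨rfl, rfl⟩ | ⟨rfl, rfl⟩ | ⟨rfl, rfl⟩ | ⟨rfl, rfl⟩
    · exact ⟨n01 + 1, n23, n02, n13, n03, n12, by rw [succ_nsmul]; abel⟩
    · exact ⟨n01, n23 + 1, n02, n13, n03, n12, by rw [succ_nsmul]; abel⟩
    · exact ⟨n01, n23, n02 + 1, n13, n03, n12, by rw [succ_nsmul]; abel⟩
    · exact ⟨n01, n23, n02, n13 + 1, n03, n12, by rw [succ_nsmul]; abel⟩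
    · exact ⟨n01, n23, n02, n13, n03 + 1, n12, by rw [succ_nsmul]; abel⟩
    · exact ⟨n01, n23, n02, n13, n03, n12 + 1, by rw [succ_nsmul]; abel⟩

theorem cutSize_nsmul_singleton (n : ℕ) (e : Sym2 W) (X : Finset W) :
    cutSize (n • {e}) X = n * crosses X e := by
  simp [cutSize, Multiset.map_nsmul, Multiset.sum_nsmul]

/-- If every degree is `k` or `k + 1`, the six multiplicities are nearly symmetric: the two
multiplicities of a splitting differ by half of a signed sum of degrees, which is the reason why
`k` splittings can be chosen among the edges. -/
theorem exists_splitting_counts (τ : Fin 4 → W) (hτ : Function.Injective τ)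
    (M : Multiset (Sym2 W))
    (hM : ∀ e ∈ M, ∃ a ∈ Finset.univ.image τ, ∃ b ∈ Finset.univ.image τ, a ≠ b ∧ e = s(a, b))
    (k : ℕ) (hk : ∀ i, cutSize M {τ i} = k ∨ cutSize M {τ i} = k + 1) :
    ∃ x y z, x + y + z = k ∧
      x • ({s(τ 0, τ 1), s(τ 2, τ 3)} : Multiset (Sym2 W)) +
        y • ({s(τ 0, τ 2), s(τ 1, τ 3)} : Multiset (Sym2 W)) +
        z • ({s(τ 0, τ 3), s(τ 1, τ 2)} : Multiset (Sym2 W)) ≤ M := by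
  obtain ⟨n01, n23, n02, n13, n03, n12, rfl⟩ := exists_multiplicities τ M hM
  have h0 := hk 0
  have h1 := hk 1
  have h2 := hk 2
  have h3 := hk 3
  simp [cutSize_add, cutSize_nsmul_singleton, crosses_mk, hτ.eq_iff] at h0 h1 h2 h3
  obtain ⟨x, y, z, hxyz, hx, hx', hy, hy', hz, hz'⟩ : ∃ x y z, x + y + z = k ∧
      x ≤ n01 ∧ x ≤ n23 ∧ y ≤ n02 ∧ y ≤ n13 ∧ z ≤ n03 ∧ z ≤ n12 := by
    have : k ≤ min n01 n23 + min n02 n13 + min n03 n12 := by omega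
    refine ⟨min k (min n01 n23), min (k - min k (min n01 n23)) (min n02 n13),
      k - min k (min n01 n23) - min (k - min k (min n01 n23)) (min n02 n13), ?_⟩
    omega
  refine ⟨x, y, z, hxyz, ?_⟩
  simp only [Multiset.insert_eq_cons, ← Multiset.singleton_add _ ({_} : Multiset (Sym2 W)),
    nsmul_add, ← add_assoc]
  gcongr

end Terminals

/-! ### Attaching auxiliary terminals -/

section Auxiliary

variable {V E : Type} [Fintype E] [DecidableEq V]

/-- The multigraph with edges `s e — t e`, together with a new terminal `Sum.inr i` joined to `v i`
by `m i` parallel edges, for each `i`. -/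
def auxGraph (s t : E → V) (v : Fin 4 → V) (m : Fin 4 → ℕ) : Multiset (Sym2 (V ⊕ Fin 4)) :=
  (Finset.univ : Finset E).val.map (fun e => s(Sum.inl (s e), Sum.inl (t e))) +
    ∑ i, m i • {s(Sum.inr i, Sum.inl (v i))}

/-- Contraction of each auxiliary terminal onto the vertex it is attached to. -/
def proj (v : Fin 4 → V) : V ⊕ Fin 4 → V := Sum.elim id v

theorem cutSize_auxGraph (s t : E → V) (v : Fin 4 → V) (m : Fin 4 → ℕ)
    (X : Finset (V ⊕ Fin 4)) :
    cutSize (auxGraph s t v m) X =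
      (Finset.univ.filter fun e => ¬ (Sum.inl (s e) ∈ X ↔ Sum.inl (t e) ∈ X)).card +
      ∑ i, m i * (if (Sum.inr i ∈ X ↔ Sum.inl (v i) ∈ X) then 0 else 1) := by
  rw [auxGraph, cutSize_add]
  congr 1
  · rw [cutSize, Multiset.map_map, Finset.card_filter]
    simp only [Finset.sum, Function.comp_def, crosses_mk, ite_not]
  · have : ∀ S : Finset (Fin 4), cutSize (∑ i ∈ S, m i • {s(Sum.inr i, Sum.inl (v i))}) X =
        ∑ i ∈ S, m i * (if (Sum.inr i ∈ X ↔ Sum.inl (v i) ∈ X) then 0 else 1) := by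
      intro S
      induction S using Finset.induction_on with
      | empty => simp [cutSize]
      | insert i S hi ih =>
        rw [Finset.sum_insert hi, Finset.sum_insert hi, cutSize_add, ih,
          cutSize_nsmul_singleton, crosses_mk]
    exact this _

theorem realizes_auxGraph {bnd : E → Finset V} {s t : E → V} (hst : ∀ e, bnd e = {s e, t e})
    (v : Fin 4 → V) (m : Fin 4 → ℕ) :
    Realizes bnd (proj v) (auxGraph s t v m) (Finset.univ : Finset E).val := by
  have h0 : Realizes bnd (proj v) 0 0 := ⟨0, by simp⟩
  have h1 : ∀ A : Multiset E, Realizes bnd (proj v)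
      (A.map fun e => s(Sum.inl (s e), Sum.inl (t e))) A := by
    intro A
    induction A using Multiset.induction_on with
    | empty => exact h0
    | cons e A ih =>
      rw [Multiset.map_cons]
      exact realizes_cons.2 ⟨[e], A, .cons (hst e) (.nil _), by simp, ih⟩
  have h2 : ∀ (i : Fin 4) (n : ℕ), Realizes bnd (proj v) (n • {s(Sum.inr i, Sum.inl (v i))}) 0 := by
    intro i n
    induction n with
    | zero => simpa using h0
    | succ n ih =>
      rw [succ_nsmul, add_comm, Multiset.singleton_add]
      exact realizes_cons.2 ⟨[], 0, .nil _, by simp, ih⟩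
  have h3 : ∀ S : Finset (Fin 4),
      Realizes bnd (proj v) (∑ i ∈ S, m i • {s(Sum.inr i, Sum.inl (v i))}) 0 := by
    intro S
    induction S using Finset.induction_on with
    | empty => simpa using h0
    | insert i S hi ih =>
      rw [Finset.sum_insert hi]
      simpa using (h2 i (m i)).add ih
  simpa [auxGraph] using (h1 Finset.univ.val).add (h3 Finset.univ)

/-- Packing of splittings under the cut condition: every vertex set containing exactly one of the
four vertices `v i` is left by at least `k` edges. -/
theorem exists_pairs_of_cuts [Fintype V] {bnd : E → Finset V} {s t : E → V}
    (hst : ∀ e, bnd e = {s e, t e}) (hne : ∀ e, s e ≠ t e)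
    (v : Fin 4 → V) (hv : Function.Injective v) (k : ℕ)
    (heven : ∀ y, y ∉ Set.range v → Even (vdeg bnd y))
    (hcut : ∀ i, ∀ X : Finset V, (∀ j, v j ∈ X ↔ j = i) →
      k ≤ (Finset.univ.filter fun e => ¬ (s e ∈ X ↔ t e ∈ X)).card) :
    ∃ l : List ((V × V × List E) × (V × V × List E)), l.length = k ∧
        (∀ q ∈ l, Trail bnd q.1.1 q.1.2.1 q.1.2.2 ∧ Trail bnd q.2.1 q.2.2.1 q.2.2.2 ∧
          ({q.1.1, q.1.2.1, q.2.1, q.2.2.1} : Finset V) = {v 0, v 1, v 2, v 3}) ∧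
        (l.flatMap fun q => q.1.2.2 ++ q.2.2.2 : List E).Nodup := by
  -- `m i` is the element of `{k, k + 1}` with the parity of the degree of `v i`
  obtain ⟨m, hm, hmpar⟩ : ∃ m : Fin 4 → ℕ, (∀ i, m i = k ∨ m i = k + 1) ∧
      ∀ i, (vdeg bnd (v i) + m i) % 2 = 0 := by
    refine ⟨fun i => k + (vdeg bnd (v i) + k) % 2, fun i => ?_, fun i => ?_⟩ <;> dsimp only <;> omega
  set G := auxGraph s t v m with hG
  let τ : Fin 4 → V ⊕ Fin 4 := Sum.inr
  set T : Finset (V ⊕ Fin 4) := Finset.univ.image τ with hT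
  have hτT : ∀ i, (Sum.inr i : V ⊕ Fin 4) ∈ T := fun i => Finset.mem_image_of_mem τ (Finset.mem_univ i)
  have hdeg : ∀ i, cutSize G {Sum.inr i} = m i := by
    intro i
    rw [hG, cutSize_auxGraph]
    simp
  have hvdeg : ∀ y, (Finset.univ.filter fun e =>
      ¬ ((Sum.inl (s e) : V ⊕ Fin 4) ∈ ({Sum.inl y} : Finset (V ⊕ Fin 4)) ↔
        (Sum.inl (t e) : V ⊕ Fin 4) ∈ ({Sum.inl y} : Finset (V ⊕ Fin 4)))).card = vdeg bnd y := by
    intro y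
    rw [vdeg]
    congr 1
    ext e
    have := hne e
    simp only [Finset.mem_filter, Finset.mem_univ, true_and, Finset.mem_singleton, Sum.inl.injEq,
      hst e, Finset.mem_insert]
    constructor
    · intro h
      by_contra h'
      push Not at h'
      exact h ⟨fun h1 => (h'.1 h1.symm).elim, fun h1 => (h'.2 h1.symm).elim⟩
    · rintro (rfl | rfl) h
      · exact this (h.1 rfl).symm
      · exact this (h.2 rfl)
  have hev : ∀ z, z ∉ T → cutSize G {z} % 2 = 0 := by
    rintro (y | i) hz
    · rw [hG, cutSize_auxGraph, hvdeg]
      by_cases hy : y ∈ Set.range v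
      · obtain ⟨i, rfl⟩ := hy
        rw [Finset.sum_eq_single i]
        · simpa using hmpar i
        · intro j _ hj
          simp [hv.eq_iff, hj]
        · simp
      · rw [Finset.sum_eq_zero]
        · have := Nat.even_iff.1 (heven y hy)
          simpa using this
        · intro j _
          have : v j ≠ y := fun h => hy ⟨j, h⟩
          simp [this]
    · exact (hz (hτT i)).elim
  have hcutG : ∀ r ∈ T, ∀ X : Finset (V ⊕ Fin 4), X ∩ T = {r} → cutSize G {r} ≤ cutSize G X := by
    intro r hr X hX
    obtain ⟨i, -, rfl⟩ := Finset.mem_image.1 hr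
    have hpar := cutSize_mod G T hev hX
    -- a lower bound `k` is enough even when `m i = k + 1`, because the parities agree
    suffices h : k ≤ cutSize G X by
      have h1 := hdeg i
      have h2 := hm i
      change cutSize G X % 2 = cutSize G {Sum.inr i} % 2 at hpar
      change cutSize G {Sum.inr i} ≤ _
      omega
    have hXT : ∀ j, Sum.inr j ∈ X ↔ j = i := by
      intro j
      have := congrArg (Sum.inr j ∈ ·) hX
      simpa [hτT j, τ] using this
    have haux : ∀ j, ¬ (Sum.inr j ∈ X ↔ Sum.inl (v j) ∈ X) → k ≤ cutSize G X := by
      intro j hj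
      have h1 : k ≤ m j := by have := hm j; omega
      have h2 := Finset.single_le_sum (f := fun i => m i *
        (if (Sum.inr i ∈ X ↔ Sum.inl (v i) ∈ X) then 0 else 1)) (fun _ _ => Nat.zero_le _)
        (Finset.mem_univ j)
      rw [if_neg hj, mul_one] at h2
      rw [hG, cutSize_auxGraph]
      omega
    by_cases hall : ∀ j, (Sum.inr j ∈ X ↔ Sum.inl (v j) ∈ X)
    · have := hcut i (Finset.univ.filter fun y => Sum.inl y ∈ X) (by
        intro j
        simp [← hall j, hXT j])
      rw [hG, cutSize_auxGraph]
      simp only [Finset.mem_filter, Finset.mem_univ, true_and] at this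
      omega
    · push Not at hall
      obtain ⟨j, hj⟩ := hall
      exact haux j (by tauto)
  obtain ⟨M', hR, hM', hM'T⟩ := exists_terminal_edges
    (fun M => Realizes bnd (proj v) M (Finset.univ : Finset E).val)
    (fun _ _ _ _ h => h.join) (fun _ _ hle h => h.drop hle) T _ G rfl
    (realizes_auxGraph hst v m) hev hcutG
  obtain ⟨x, y, z, hxyz, hle⟩ := exists_splitting_counts τ Sum.inr_injective M' hM'T k (by
    intro i
    rw [hM' _ (hτT i), hdeg i]
    exact hm i)
  obtain ⟨l, h1, h2, h3⟩ := Realizes.exists_pairs v τ (fun i => rfl) k x y z _ hxyz (hR.drop hle)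
  exact ⟨l, h1, h2, Multiset.coe_nodup.1 (Multiset.nodup_of_le h3 Finset.univ.nodup)⟩

end Auxiliary

theorem stmt12 {V E : Type} [Fintype V] [Fintype E] [DecidableEq V] [DecidableEq E]
    (bnd : E → Finset V) (hbnd : ∀ e, (bnd e).card = 2)
    (k : ℕ) (hk : 1 ≤ k)
    (v1 v2 v3 v4 : V) (hdist : ({v1, v2, v3, v4} : Finset V).card = 4)
    (heven : ∀ y : V, y ∉ ({v1, v2, v3, v4} : Finset V) → Even (vdeg bnd y))
    -- after deleting any `k-1` or fewer edges, the four vertices split into two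
    -- pairs joined by two edge-disjoint paths avoiding the deleted edges:
    (hdel : ∀ S : Finset E, S.card ≤ k - 1 →
      ∃ (a b c d : V) (ws1 : List V) (es1 : List E) (ws2 : List V) (es2 : List E),
        ({a, b, c, d} : Finset V) = {v1, v2, v3, v4} ∧
        IsPath bnd a b ws1 es1 ∧ IsPath bnd c d ws2 es2 ∧
        (∀ e ∈ es1, e ∉ S) ∧ (∀ e ∈ es2, e ∉ S) ∧
        (∀ e ∈ es1, e ∉ es2)) :
    -- `k` splittings into two pairs, with `2k` pairwise edge-disjoint paths:
    ∃ (a b c d : Fin k → V) (ws : Fin k → Bool → List V) (es : Fin k → Bool → List E),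
      (∀ j, ({a j, b j, c j, d j} : Finset V) = {v1, v2, v3, v4}) ∧
      (∀ j, IsPath bnd (a j) (b j) (ws j false) (es j false)) ∧
      (∀ j, IsPath bnd (c j) (d j) (ws j true) (es j true)) ∧
      (∀ j₁ t₁ j₂ t₂, (j₁, t₁) ≠ (j₂, t₂) → ∀ e ∈ es j₁ t₁, e ∉ es j₂ t₂) := by
  choose s t hne hst using fun e => Finset.card_eq_two.1 (hbnd e)
  let v : Fin 4 → V := ![v1, v2, v3, v4]
  have himg : Finset.univ.image v = {v1, v2, v3, v4} := by
    ext x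
    simp [v, Fin.exists_fin_succ, eq_comm]
  have hv : Function.Injective v := by
    rw [← Set.injOn_univ, ← Finset.coe_univ, ← Finset.card_image_iff, himg, hdist]
    rfl
  obtain ⟨l, hl, hl', hnd⟩ := exists_pairs_of_cuts hst hne v hv k
    (by
      intro y hy
      refine heven y fun h => hy ?_
      rw [← himg] at h
      simpa using h)
    (by
      -- an odd cut with fewer than `k` edges could be deleted, but one of the two paths crosses it
      intro i X hX
      by_contra hlt
      obtain ⟨a, b, c, d, ws1, es1, ws2, es2, hset, hp1, hp2, hS1, hS2, -⟩ :=
        hdel (Finset.univ.filter fun e => ¬ (s e ∈ X ↔ t e ∈ X)) (by omega)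
      have hcr : ∀ (u w : V) (ws : List V) (es : List E), IsPath bnd u w ws es →
          (∀ e ∈ es, e ∉ Finset.univ.filter fun e => ¬ (s e ∈ X ↔ t e ∈ X)) →
          (u ∈ X ↔ w ∈ X) := by
        intro u w ws es hp hS
        by_contra huw
        obtain ⟨e, he, x, y, hxy, hx, hy⟩ := hp.exists_crossing X huw
        have := hS e he
        simp only [Finset.mem_filter, Finset.mem_univ, true_and, not_not] at this
        rw [hst e] at hxy
        have hx' : x = s e ∨ x = t e := by
          have : x ∈ ({s e, t e} : Finset V) := by simp [hxy]
          simpa using this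
        have hs' : s e = x ∨ s e = y := by
          have : s e ∈ ({x, y} : Finset V) := by simp [← hxy]
          simpa using this
        have ht' : t e = x ∨ t e = y := by
          have : t e ∈ ({x, y} : Finset V) := by simp [← hxy]
          simpa using this
        have := hne e
        grind
      have h1 := hcr a b ws1 es1 hp1 hS1
      have h2 := hcr c d ws2 es2 hp2 hS2
      have hmem : ∀ x ∈ ({a, b, c, d} : Finset V), (x ∈ X ↔ x = v i) := by
        intro x hx
        rw [hset, ← himg] at hx
        obtain ⟨j, -, rfl⟩ := Finset.mem_image.1 hx
        rw [hX, hv.eq_iff]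
      have hvi : v i ∈ ({a, b, c, d} : Finset V) := by
        rw [hset, ← himg]
        exact Finset.mem_image_of_mem v (Finset.mem_univ i)
      have ha := hmem a (by simp)
      have hb := hmem b (by simp)
      have hc := hmem c (by simp)
      have hd := hmem d (by simp)
      -- the four endpoints are distinct
      have hcard : ({a, b, c, d} : Finset V).card = 4 := hset ▸ hdist
      have hab : a ≠ b := by
        rintro rfl
        have := Finset.card_le_three (a := a) (b := c) (c := d)
        simp only [Finset.insert_idem] at hcard
        omega
      have hcd : c ≠ d := by
        rintro rfl
        have := Finset.card_le_three (a := a) (b := b) (c := c)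
        simp only [Finset.pair_eq_singleton] at hcard
        omega
      simp only [Finset.mem_insert, Finset.mem_singleton] at hvi
      grind)
  subst hl
  rw [List.nodup_flatMap] at hnd
  obtain ⟨hnd1, hnd2⟩ := hnd
  have hnd1' : ∀ j : Fin l.length, (l.get j).1.2.2.Nodup ∧ (l.get j).2.2.2.Nodup ∧
      ∀ e ∈ (l.get j).1.2.2, e ∉ (l.get j).2.2.2 := by
    intro j
    have h := hnd1 _ (l.get_mem j)
    rw [List.nodup_append] at h
    exact ⟨h.1, h.2.1, fun e h1 h2 => h.2.2 e h1 e h2 rfl⟩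
  have hw1 : ∀ j : Fin l.length, ∃ ws, IsPath bnd (l.get j).1.1 (l.get j).1.2.1 ws
      (l.get j).1.2.2 := fun j => (hl' _ (l.get_mem j)).1.exists_isPath (hnd1' j).1
  have hw2 : ∀ j : Fin l.length, ∃ ws, IsPath bnd (l.get j).2.1 (l.get j).2.2.1 ws
      (l.get j).2.2.2 := fun j => (hl' _ (l.get_mem j)).2.1.exists_isPath (hnd1' j).2.1
  choose ws1 hws1 using hw1
  choose ws2 hws2 using hw2
  refine ⟨fun j => (l.get j).1.1, fun j => (l.get j).1.2.1, fun j => (l.get j).2.1,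
    fun j => (l.get j).2.2.1, fun j b => bif b then ws2 j else ws1 j,
    fun j b => bif b then (l.get j).2.2.2 else (l.get j).1.2.2,
    fun j => (hl' _ (l.get_mem j)).2.2, hws1, hws2, ?_⟩
  have hdisj : ∀ j₁ j₂ : Fin l.length, j₁ ≠ j₂ → ∀ e ∈ (l.get j₁).1.2.2 ++ (l.get j₁).2.2.2,
      e ∉ (l.get j₂).1.2.2 ++ (l.get j₂).2.2.2 := by
    intro j₁ j₂ hj e h1 h2
    rw [List.pairwise_iff_get] at hnd2
    rcases lt_or_gt_of_ne hj with h | h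
    · exact hnd2 j₁ j₂ h h1 h2
    · exact hnd2 j₂ j₁ h h2 h1
  intro j₁ t₁ j₂ t₂ hne' e he he'
  by_cases hj : j₁ = j₂
  · subst hj
    have hdis := (hnd1' j₁).2.2 e
    cases t₁ <;> cases t₂
    · exact hne' rfl
    · exact hdis he he'
    · exact hdis he' he
    · exact hne' rfl
  · refine hdisj j₁ j₂ hj e ?_ ?_
    · cases t₁
      exacts [List.mem_append_left _ he, List.mem_append_right _ he]
    · cases t₂
      exacts [List.mem_append_left _ he', List.mem_append_right _ he']
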